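/- arXiv:2101.07118 — 7 statements merged into one kernel-verified Lean document; each statement's English description precedes it below -/
import Mathlib

section
/- Let i₁, i₂ be two (not necessarily distinct) elements of C. If x : Fin N → (Fin n → ℝ) satisfies x i = x j for all i, j ∈ C, then the controlled vector field G defined by G(x) i = f (x i) - σ • ∑_{j} L'' i j • (H.mulVec (x j)) satisfies G(x) i₁ = G(x) i₂. In other words, the synchronization subspace { x : Fin N → ℝⁿ | x i = x j for all i, j ∈ C } is invariant under the controlled vector field. -/
/-- Invariance of the cluster-synchronization subspace under the controlled
vector field: if the matrix `L''` has zero row sums, equal rows on the cluster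
`C` off the cluster indices (H1), and zero entries between distinct cluster
nodes (H2), then the controlled vector field
`G x i = f (x i) - σ • ∑ j, L'' i j • H.mulVec (x j)` takes equal values at any
two cluster nodes whenever `x` is synchronized on the cluster. -/
theorem stmt_0 (N n : ℕ) (hN : 0 < N) (hn : 0 < n)
    (C : Set (Fin N)) (hC : C.Nonempty)
    (L'' : Matrix (Fin N) (Fin N) ℝ)
    (hrow : ∀ i, ∑ j, L'' i j = 0)
    (H1 : ∀ i₁ ∈ C, ∀ i₂ ∈ C, ∀ j, j ≠ i₁ → j ≠ i₂ → L'' i₁ j = L'' i₂ j)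
    (H2 : ∀ i₁ ∈ C, ∀ i₂ ∈ C, i₁ ≠ i₂ → L'' i₁ i₂ = 0)
    (f : (Fin n → ℝ) → (Fin n → ℝ)) (H : Matrix (Fin n) (Fin n) ℝ) (σ : ℝ)
    (G : (Fin N → (Fin n → ℝ)) → Fin N → (Fin n → ℝ))
    (hG : ∀ x i, G x i = f (x i) - σ • ∑ j, L'' i j • (H.mulVec (x j)))
    (i₁ : Fin N) (hi₁ : i₁ ∈ C) (i₂ : Fin N) (hi₂ : i₂ ∈ C)
    (x : Fin N → (Fin n → ℝ))
    (hx : ∀ i ∈ C, ∀ j ∈ C, x i = x j) :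
    G x i₁ = G x i₂ := by
  have key : ∀ i, ∑ j, L'' i j • (H.mulVec (x j))
      = ∑ j, L'' i j • (H.mulVec (x j) - H.mulVec (x i₁)) := by
    intro i
    simp only [smul_sub, Finset.sum_sub_distrib, ← Finset.sum_smul, hrow i, zero_smul, sub_zero]
  rw [hG, hG, key i₁, key i₂, hx i₁ hi₁ i₂ hi₂]
  congr 2
  refine Finset.sum_congr rfl fun j _ => ?_
  by_cases h1 : j = i₁
  · rw [h1, hx i₁ hi₁ i₂ hi₂, sub_self, smul_zero, smul_zero]
  by_cases h2 : j = i₂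
  · rw [h2, sub_self, smul_zero, smul_zero]
  rw [H1 i₁ hi₁ i₂ hi₂ j h1 h2]
end

section
/- Suppose x : ℝ → Fin N → (Fin n → ℝ) is differentiable and satisfies, for every t, the coupled network equations (d/dt) x(t) i = f (x(t) i) - σ • ∑_{j} L'' i j • (H.mulVec (x(t) j)) for every node i, and suppose the initial condition is synchronized on C, i.e. x(0) i = x(0) j for all i, j ∈ C. Then for every time t and all i, j ∈ C one has x(t) i = x(t) j; that is, a synchronous solution on the cluster C exists and solutions starting on the synchronization subspace remain on it. -/
/-- Existence of the synchronous solution / forward invariance of the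
synchronization subspace: if a differentiable trajectory of the controlled
network starts synchronized on the cluster `C`, it stays synchronized on `C`
for all times. -/
theorem stmt_1 (N n : ℕ) (hN : 0 < N) (hn : 0 < n)
    (C : Set (Fin N)) (hC : C.Nonempty)
    (L'' : Matrix (Fin N) (Fin N) ℝ)
    (hrow : ∀ i, ∑ j, L'' i j = 0)
    (H1 : ∀ i₁ ∈ C, ∀ i₂ ∈ C, ∀ j, j ≠ i₁ → j ≠ i₂ → L'' i₁ j = L'' i₂ j)
    (H2 : ∀ i₁ ∈ C, ∀ i₂ ∈ C, i₁ ≠ i₂ → L'' i₁ i₂ = 0)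
    (f : (Fin n → ℝ) → (Fin n → ℝ)) (K : NNReal) (hf : LipschitzWith K f)
    (H : Matrix (Fin n) (Fin n) ℝ) (σ : ℝ)
    (x : ℝ → Fin N → (Fin n → ℝ))
    (hode : ∀ t, ∀ i, HasDerivAt (fun s => x s i)
      (f (x t i) - σ • ∑ j, L'' i j • (H.mulVec (x t j))) t)
    (hinit : ∀ i ∈ C, ∀ j ∈ C, x 0 i = x 0 j) :
    ∀ t, ∀ i ∈ C, ∀ j ∈ C, x t i = x t j := by
  intro t i hi k hk
  by_cases hik : i = k
  · rw [hik]
  have split : ∀ {E : Type} [AddCommGroup E] [Module ℝ E] (a : Fin N → ℝ) (g : Fin N → E),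
      ∑ j, a j • g j = a i • g i + (a k • g k + ∑ j ∈ (Finset.univ.erase i).erase k, a j • g j) := by
    intro E _ _ a g
    rw [Finset.add_sum_erase _ (fun j => a j • g j) (by simp [Ne.symm hik]),
      Finset.add_sum_erase _ (fun j => a j • g j) (by simp)]
  have hikz : L'' i k = 0 := H2 i hi k hk hik
  have hkiz : L'' k i = 0 := H2 k hk i hi (Ne.symm hik)
  have hrest : ∀ {E : Type} [AddCommGroup E] [Module ℝ E] (g : Fin N → E),
      ∑ j ∈ (Finset.univ.erase i).erase k, L'' k j • g j
        = ∑ j ∈ (Finset.univ.erase i).erase k, L'' i j • g j := by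
    intro E _ _ g
    refine Finset.sum_congr rfl fun j hj => ?_
    simp only [Finset.mem_erase, Finset.mem_univ, and_true] at hj
    rw [H1 k hk i hi j hj.1 hj.2]
  have hdiag : L'' k k = L'' i i := by
    have h1 := split (fun j => L'' i j) (fun _ => (1 : ℝ))
    have h2 := split (fun j => L'' k j) (fun _ => (1 : ℝ))
    have h3 := hrest (fun _ => (1 : ℝ))
    simp only [smul_eq_mul, mul_one, hrow, hikz, hkiz] at h1 h2 h3
    linarith
  let A : (Fin n → ℝ) →L[ℝ] (Fin n → ℝ) :=
    LinearMap.toContinuousLinearMap ((σ * L'' i i) • H.mulVecLin)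
  let c : ℝ → (Fin n → ℝ) := fun s =>
    σ • ∑ j ∈ (Finset.univ.erase i).erase k, L'' i j • (H.mulVec (x s j))
  let v : ℝ → (Fin n → ℝ) → (Fin n → ℝ) := fun s y => f y - A y - c s
  have hA : ∀ y, A y = (σ * L'' i i) • H.mulVec y := fun y => rfl
  have hv : ∀ s, LipschitzOnWith (K + ‖A‖₊ + 0) (v s) Set.univ := fun s =>
    ((hf.sub A.lipschitz).sub (LipschitzWith.const (c s))).lipschitzOnWith
  have key := ODE_solution_unique_univ (v := v) (s := fun _ => Set.univ) (t₀ := 0)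
    (f := fun s => x s i) (g := fun s => x s k) hv
    (fun s => ⟨by
      have h := hode s i
      have e : f (x s i) - σ • ∑ j, L'' i j • (H.mulVec (x s j)) = v s (x s i) := by
        rw [split (fun j => L'' i j) (fun j => H.mulVec (x s j))]
        simp only [v, c, hA, hikz, zero_smul, zero_add, smul_add, smul_smul, sub_sub]
      rw [e] at h
      exact h, trivial⟩)
    (fun s => ⟨by
      have h := hode s k
      have e : f (x s k) - σ • ∑ j, L'' k j • (H.mulVec (x s j)) = v s (x s k) := by
        rw [split (fun j => L'' k j) (fun j => H.mulVec (x s j)),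
          hrest (fun j => H.mulVec (x s j))]
        simp only [v, c, hA, hkiz, hdiag, zero_smul, zero_add, smul_add, smul_smul, sub_sub]
      rw [e] at h
      exact h, trivial⟩)
    (hinit i hi k hk)
  exact congrFun key t
end

section
/- Suppose all rows of C are equal to a fixed row vector c : Fin n₁ → ℝ, i.e. C i j = c j for all i, j. Then the matrix Rᵀ * C has nonzero entries only in its row indexed by 0: precisely, (Rᵀ * C) 0 j = Real.sqrt n₂ * c j for all j, and (Rᵀ * C) i j = 0 for all i ≠ 0 and all j. -/
open Matrix

/-- If all rows of `C` equal a fixed row vector `c` and `R` is an orthogonal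
matrix whose column `0` is the constant vector `1 / √n₂`, then `Rᵀ * C` has
nonzero entries only in the row indexed by `0`: its row `0` is `√n₂ • c` and
all other rows vanish. -/
theorem stmt_4 (n₁ n₂ : ℕ) (hn₁ : 0 < n₁) (hn₂ : 0 < n₂)
    (C : Matrix (Fin n₂) (Fin n₁) ℝ) (c : Fin n₁ → ℝ)
    (hC : ∀ i j, C i j = c j)
    (R : Matrix (Fin n₂) (Fin n₂) ℝ)
    (hR : Rᵀ * R = 1)
    (hcol : ∀ i, R i ⟨0, hn₂⟩ = 1 / Real.sqrt n₂) :
    (∀ j, (Rᵀ * C) ⟨0, hn₂⟩ j = Real.sqrt n₂ * c j) ∧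
      (∀ i, i ≠ ⟨0, hn₂⟩ → ∀ j, (Rᵀ * C) i j = 0) := by
  have hs : Real.sqrt n₂ ≠ 0 := by
    have : (0 : ℝ) < n₂ := by exact_mod_cast hn₂
    exact (Real.sqrt_pos.mpr this).ne'
  have key : ∀ i j, (Rᵀ * C) i j = Real.sqrt n₂ * c j * (Rᵀ * R) i ⟨0, hn₂⟩ := by
    intro i j
    rw [Matrix.mul_apply, Matrix.mul_apply, Finset.mul_sum]
    refine Finset.sum_congr rfl fun k _ => ?_
    rw [hC, hcol]
    field_simp
  refine ⟨fun j => ?_, fun i hi j => ?_⟩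
  · rw [key, hR, Matrix.one_apply_eq, mul_one]
  · rw [key, hR, Matrix.one_apply_ne hi, mul_zero]
end

section
/- Suppose there are constants 0 < l, 0 < μ, 0 < τ such that L - l • 1 and μ • 1 - L are positive semidefinite, and for every t the matrix -(τ • 1) - ((A t)ᵀ * L + L * (A t)) is positive semidefinite. Then every differentiable ζ : ℝ → (Fin n → ℝ) satisfying (d/dt) ζ(t) = (A t).mulVec (ζ t) decays exponentially: for all t ≥ 0, ‖ζ(t)‖² ≤ (μ / l) * Real.exp (-(τ / μ) * t) * ‖ζ(0)‖². -/
open Matrix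

/-- Exponential decay from the Lyapunov LMI: if `l • 1 ≤ L ≤ μ • 1` (in the
semidefinite order), `L` symmetric positive definite, and
`(A t)ᵀ L + L (A t) ≤ -τ • 1` for all `t`, then every solution of
`ζ' = A(t) ζ` satisfies `‖ζ(t)‖² ≤ (μ/l) e^{-(τ/μ) t} ‖ζ(0)‖²` for `t ≥ 0`. -/
theorem stmt_7 (n : ℕ) (hn : 0 < n)
    (L : Matrix (Fin n) (Fin n) ℝ) (hLsymm : L.IsSymm) (hLpos : L.PosDef)
    (A : ℝ → Matrix (Fin n) (Fin n) ℝ)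
    (l μ τ : ℝ) (hl : 0 < l) (hμ : 0 < μ) (hτ : 0 < τ)
    (hlow : (L - l • (1 : Matrix (Fin n) (Fin n) ℝ)).PosSemidef)
    (hup : (μ • (1 : Matrix (Fin n) (Fin n) ℝ) - L).PosSemidef)
    (hLMI : ∀ t, (-(τ • (1 : Matrix (Fin n) (Fin n) ℝ)) -
      ((A t)ᵀ * L + L * (A t))).PosSemidef)
    (ζ : ℝ → EuclideanSpace ℝ (Fin n))
    (hζ : ∀ t, HasDerivAt ζ (Matrix.toEuclideanLin (A t) (ζ t)) t) :
    ∀ t, 0 ≤ t →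
      ‖ζ t‖ ^ 2 ≤ (μ / l) * Real.exp (-(τ / μ) * t) * ‖ζ 0‖ ^ 2 := by
  have hz : ∀ t i, HasDerivAt (fun s => (ζ s).ofLp i) ((A t *ᵥ (ζ t).ofLp) i) t := by
    intro t i
    have h := (EuclideanSpace.proj (𝕜 := ℝ) i).hasFDerivAt.comp_hasDerivAt t (hζ t)
    simpa [Function.comp_def] using h
  have hnorm : ∀ t, ‖ζ t‖ ^ 2 = (ζ t).ofLp ⬝ᵥ (ζ t).ofLp := by
    intro t
    rw [EuclideanSpace.real_norm_sq_eq]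
    simp [dotProduct, sq]
  generalize hzz : (fun t => (ζ t).ofLp) = z at *
  have hzt : ∀ t, (ζ t).ofLp = z t := fun t => congrFun hzz t
  simp only [hzt] at hz hnorm
  simp only [hnorm]
  have h1 : ∀ x : Fin n → ℝ, l * (x ⬝ᵥ x) ≤ x ⬝ᵥ (L *ᵥ x) := by
    intro x
    have h := hlow.dotProduct_mulVec_nonneg x
    simp [sub_mulVec, smul_mulVec, dotProduct_sub] at h
    linarith
  have h2 : ∀ x : Fin n → ℝ, x ⬝ᵥ (L *ᵥ x) ≤ μ * (x ⬝ᵥ x) := by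
    intro x
    have h := hup.dotProduct_mulVec_nonneg x
    simp [sub_mulVec, smul_mulVec, dotProduct_sub] at h
    linarith
  have h3 : ∀ t, ∀ x : Fin n → ℝ,
      (A t *ᵥ x) ⬝ᵥ (L *ᵥ x) + x ⬝ᵥ (L *ᵥ (A t *ᵥ x)) ≤ -τ * (x ⬝ᵥ x) := by
    intro t x
    have h := (hLMI t).dotProduct_mulVec_nonneg x
    have e : x ⬝ᵥ (((A t)ᵀ * L) *ᵥ x) = (A t *ᵥ x) ⬝ᵥ (L *ᵥ x) := by
      rw [← mulVec_mulVec, dotProduct_mulVec, vecMul_transpose]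
    simp only [star_trivial, sub_mulVec, add_mulVec, neg_mulVec, smul_mulVec, one_mulVec,
      dotProduct_sub, dotProduct_add, dotProduct_neg, dotProduct_smul, smul_eq_mul, e,
      ← mulVec_mulVec x L (A t)] at h
    linarith
  have hV : ∀ t, HasDerivAt (fun s => z s ⬝ᵥ (L *ᵥ z s))
      ((A t *ᵥ z t) ⬝ᵥ (L *ᵥ z t) + z t ⬝ᵥ (L *ᵥ (A t *ᵥ z t))) t := by
    intro t
    have h : HasDerivAt (fun s => ∑ i, z s i * ∑ j, L i j * z s j)
        (∑ i, ((A t *ᵥ z t) i * (∑ j, L i j * z t j)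
          + z t i * ∑ j, L i j * (A t *ᵥ z t) j)) t :=
      HasDerivAt.fun_sum fun i _ => (hz t i).mul
        (HasDerivAt.fun_sum fun j _ => (hz t j).const_mul (L i j))
    rw [Finset.sum_add_distrib] at h
    exact h
  have hE : ∀ t, HasDerivAt (fun s : ℝ => Real.exp (τ / μ * s))
      (Real.exp (τ / μ * t) * (τ / μ)) t := by
    intro t
    simpa using ((hasDerivAt_id t).const_mul (τ / μ)).exp
  have hanti : Antitone (fun s => Real.exp (τ / μ * s) * (z s ⬝ᵥ (L *ᵥ z s))) := by
    refine antitone_of_hasDerivAt_nonpos (fun t => (hE t).mul (hV t)) fun t => ?_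
    have a := h3 t (z t)
    have b : τ / μ * (z t ⬝ᵥ (L *ᵥ z t)) ≤ τ * (z t ⬝ᵥ z t) := by
      have := mul_le_mul_of_nonneg_left (h2 (z t)) (div_pos hτ hμ).le
      rwa [← mul_assoc, div_mul_cancel₀ _ hμ.ne'] at this
    have c := Real.exp_pos (τ / μ * t)
    simp only [Pi.zero_apply]
    rw [mul_assoc, ← mul_add]
    exact mul_nonpos_of_nonneg_of_nonpos c.le (by linarith)
  intro t ht
  have h := hanti ht
  simp only [mul_zero, Real.exp_zero, one_mul] at h
  have k : Real.exp (τ / μ * t) * (l * (z t ⬝ᵥ z t)) ≤ μ * (z 0 ⬝ᵥ z 0) :=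
    (mul_le_mul_of_nonneg_left (h1 _) (Real.exp_pos _).le).trans (h.trans (h2 _))
  rw [neg_mul, Real.exp_neg]
  have c := Real.exp_pos (τ / μ * t)
  have e : μ / l * (Real.exp (τ / μ * t))⁻¹ * (z 0 ⬝ᵥ z 0)
      = (μ * (z 0 ⬝ᵥ z 0)) / (Real.exp (τ / μ * t) * l) := by
    field_simp
  rw [e, le_div_iff₀ (by positivity)]
  linarith
end

section
/- Assume the LMI hypothesis: there exist a diagonal positive definite matrix L and constants q̄ > 0 and τ > 0 such that for every q ≥ q̄ and every t, the matrix -(τ • 1) - ((J t - q • H)ᵀ * L + L * (J t - q • H)) is positive semidefinite. Assume moreover σ > 0, k > 0 and σ * k > q̄. Then there exist constants Cst > 0 and α > 0 such that every differentiable ζ : ℝ → (Fin n → ℝ) satisfying the transversal variational equation (d/dt) ζ(t) = (J t - (σ * k) • H).mulVec (ζ t) obeys ‖ζ(t)‖ ≤ Cst * Real.exp (-α * t) * ‖ζ(0)‖ for all t ≥ 0; i.e. the transversal perturbations to the synchronous state decay exponentially. -/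
open Matrix

/-- Exponential stability of the transversal variational equation: under the
LMI hypothesis with diagonal positive definite `L`, constants `qbar, τ > 0`,
and `σ * k > qbar` with `σ, k > 0`, every solution of
`ζ' = (J(t) - σ k H) ζ` decays exponentially. -/
theorem stmt_8 (n : ℕ) (hn : 0 < n)
    (H : Matrix (Fin n) (Fin n) ℝ) (J : ℝ → Matrix (Fin n) (Fin n) ℝ)
    (σ k : ℝ)
    (L : Matrix (Fin n) (Fin n) ℝ)
    (hLdiag : ∀ i j, i ≠ j → L i j = 0) (hLpos : L.PosDef)
    (qbar τ : ℝ) (hqbar : 0 < qbar) (hτ : 0 < τ)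
    (hLMI : ∀ q, qbar ≤ q → ∀ t,
      (-(τ • (1 : Matrix (Fin n) (Fin n) ℝ)) -
        ((J t - q • H)ᵀ * L + L * (J t - q • H))).PosSemidef)
    (hσ : 0 < σ) (hk : 0 < k) (hσk : qbar < σ * k) :
    ∃ Cst > 0, ∃ α > 0, ∀ ζ : ℝ → EuclideanSpace ℝ (Fin n),
      (∀ t, HasDerivAt ζ
        (Matrix.toEuclideanLin (J t - (σ * k) • H) (ζ t)) t) →
      ∀ t, 0 ≤ t → ‖ζ t‖ ≤ Cst * Real.exp (-α * t) * ‖ζ 0‖ := by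
  have : Nonempty (Fin n) := ⟨⟨0, hn⟩⟩
  obtain ⟨d, hd⟩ : ∃ d : Fin n → ℝ, d = fun i => L i i := ⟨_, rfl⟩
  have hLd : L = diagonal d := by
    ext i j
    by_cases h : i = j
    · subst h; simp [hd]
    · simp [h, hLdiag i j h]
  have hdpos : ∀ i, 0 < d i := by
    intro i
    rw [hd]
    exact hLpos.diag_pos
  obtain ⟨iM, hM⟩ := Finite.exists_max d
  obtain ⟨im, hm⟩ := Finite.exists_min d
  have hMp := hdpos iM
  have hmp := hdpos im
  generalize d iM = M at hM hMp
  generalize d im = m at hm hmp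
  have key : ∀ t (x : Fin n → ℝ),
      ∑ i, d i * (2 * x i * ((J t - (σ * k) • H) *ᵥ x) i) ≤ -τ * ∑ i, x i ^ 2 := by
    intro t x
    have h := (hLMI (σ * k) hσk.le t).dotProduct_mulVec_nonneg x
    generalize J t - (σ * k) • H = A at h ⊢
    have e1 : x ⬝ᵥ ((Aᵀ * L) *ᵥ x) = ∑ i, d i * (x i * (A *ᵥ x) i) := by
      rw [← mulVec_mulVec, dotProduct_mulVec, vecMul_transpose, hLd]
      simp only [dotProduct, mulVec_diagonal]
      exact Finset.sum_congr rfl fun i _ => by ring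
    have e2 : x ⬝ᵥ ((L * A) *ᵥ x) = ∑ i, d i * (x i * (A *ᵥ x) i) := by
      rw [← mulVec_mulVec, hLd]
      simp only [dotProduct, mulVec_diagonal]
      exact Finset.sum_congr rfl fun i _ => by ring
    have e3 : x ⬝ᵥ x = ∑ i, x i ^ 2 := by
      simp only [dotProduct]
      exact Finset.sum_congr rfl fun i _ => by ring
    have e4 : ∑ i, d i * (2 * x i * (A *ᵥ x) i) = 2 * ∑ i, d i * (x i * (A *ᵥ x) i) := by
      rw [Finset.mul_sum]
      exact Finset.sum_congr rfl fun i _ => by ring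
    rw [star_trivial, sub_mulVec, neg_mulVec, smul_mulVec, one_mulVec, add_mulVec,
      dotProduct_sub, dotProduct_neg, dotProduct_smul, dotProduct_add, e1, e2, e3,
      smul_eq_mul] at h
    rw [e4]
    linarith
  refine ⟨Real.sqrt (M / m), by positivity, τ / (2 * M), by positivity, ?_⟩
  intro ζ hζ t ht
  have hV : ∀ s, HasDerivAt (fun s => ∑ i, d i * (ζ s i) ^ 2)
      (∑ i, d i * (2 * ζ s i * ((J s - (σ * k) • H) *ᵥ (ζ s).ofLp) i)) s := by
    intro s
    refine HasDerivAt.fun_sum fun i _ => ?_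
    have h1 : HasDerivAt (fun s => ζ s i) (((J s - (σ * k) • H) *ᵥ (ζ s).ofLp) i) s :=
      ((EuclideanSpace.proj (𝕜 := ℝ) i).hasFDerivAt.comp_hasDerivAt s (hζ s))
    simpa using (h1.pow 2).const_mul (d i)
  have hup : ∀ s, ∑ i, d i * (ζ s i) ^ 2 ≤ M * ∑ i, (ζ s i) ^ 2 := by
    intro s
    rw [Finset.mul_sum]
    exact Finset.sum_le_sum fun i _ => mul_le_mul_of_nonneg_right (hM i) (sq_nonneg _)
  have hlo : ∀ s, m * ∑ i, (ζ s i) ^ 2 ≤ ∑ i, d i * (ζ s i) ^ 2 := by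
    intro s
    rw [Finset.mul_sum]
    exact Finset.sum_le_sum fun i _ => mul_le_mul_of_nonneg_right (hm i) (sq_nonneg _)
  have hW : ∀ s, HasDerivAt (fun s => (∑ i, d i * (ζ s i) ^ 2) * Real.exp (τ / M * s)) _ s :=
    fun s => (hV s).mul (((hasDerivAt_id s).const_mul (τ / M)).exp)
  have hanti := antitone_of_hasDerivAt_nonpos hW (by
    intro s
    have h1 := key s (ζ s).ofLp
    have h2 : τ / M * ∑ i, d i * (ζ s i) ^ 2 ≤ τ * ∑ i, (ζ s i) ^ 2 := by
      calc _ ≤ τ / M * (M * ∑ i, (ζ s i) ^ 2) :=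
            mul_le_mul_of_nonneg_left (hup s) (by positivity)
        _ = _ := by field_simp
    have h3 := Real.exp_pos (τ / M * s)
    simp only [id, Pi.zero_apply]
    nlinarith)
  have h0 := hanti ht
  simp only [mul_zero, Real.exp_zero, mul_one] at h0
  have hn2 : ∀ s, ‖ζ s‖ ^ 2 = ∑ i, (ζ s i) ^ 2 := fun s => EuclideanSpace.real_norm_sq_eq _
  have a1 := hlo t
  have a2 := hup 0
  rw [← hn2] at a1 a2
  have he : Real.exp (-(τ / (2 * M)) * t) ^ 2 * Real.exp (τ / M * t) = 1 := by
    rw [← Real.exp_nat_mul, ← Real.exp_add, ← Real.exp_zero]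
    congr 1
    push_cast
    field_simp
    ring
  have hE := Real.exp_pos (τ / M * t)
  refine (sq_le_sq₀ (norm_nonneg _) (by positivity)).1 ?_
  rw [mul_pow, mul_pow, Real.sq_sqrt (by positivity)]
  have a3 : m * ‖ζ t‖ ^ 2 * Real.exp (τ / M * t) ≤ M * ‖ζ 0‖ ^ 2 :=
    (mul_le_mul_of_nonneg_right a1 hE.le).trans (h0.trans a2)
  have a4 := mul_le_mul_of_nonneg_right a3 (sq_nonneg (Real.exp (-(τ / (2 * M)) * t)))
  have a5 : m * ‖ζ t‖ ^ 2 ≤ M * ‖ζ 0‖ ^ 2 * Real.exp (-(τ / (2 * M)) * t) ^ 2 := by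
    refine le_trans (le_of_eq ?_) a4
    linear_combination (-(m * ‖ζ t‖ ^ 2)) * he
  rw [div_mul_eq_mul_div, div_mul_eq_mul_div, le_div_iff₀ hmp]
  linarith
end

section
/- Let T* ⊆ S satisfy: (i) every i ∈ S with c i ≤ 0 belongs to T*; (ii) the cardinality of T* equals max k̄ (card {i ∈ S | c i ≤ 0}); (iii) for every i ∈ T* and every j ∈ S \ T*, c i ≤ c j. Then T* is an optimal solution of the reduced optimization problem: for every T ⊆ S with k̄ ≤ card T, one has ∑_{i ∈ T*} c i ≤ ∑_{i ∈ T} c i; and k̄ ≤ card T*. -/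
/-- Optimality of the greedy selection for the reduced problem
`min ∑_{i ∈ T} c i` subject to `T ⊆ S`, `k̄ ≤ |T|`: the set `Tstar`
containing all nonpositive-cost nodes, of cardinality
`max kbar |{i ∈ S | c i ≤ 0}|`, and consisting of cheapest nodes, is optimal
and feasible. -/
theorem stmt_9 {ι : Type*} [DecidableEq ι]
    (S : Finset ι) (c : ι → ℝ) (kbar : ℕ) (hkbar : kbar ≤ S.card)
    (Tstar : Finset ι) (hsub : Tstar ⊆ S)
    (h1 : ∀ i ∈ S, c i ≤ 0 → i ∈ Tstar)
    (h2 : Tstar.card = max kbar (S.filter (fun i => c i ≤ 0)).card)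
    (h3 : ∀ i ∈ Tstar, ∀ j ∈ S \ Tstar, c i ≤ c j) :
    (∀ T ⊆ S, kbar ≤ T.card → ∑ i ∈ Tstar, c i ≤ ∑ i ∈ T, c i) ∧
      kbar ≤ Tstar.card := by
  refine ⟨fun T hT hk => ?_, h2 ▸ le_max_left _ _⟩
  have hB : ∀ j ∈ T \ Tstar, 0 ≤ c j := by
    intro j hj
    rw [Finset.mem_sdiff] at hj
    by_contra hn
    exact hj.2 (h1 j (hT hj.1) (le_of_lt (not_le.mp hn)))
  have key : ∑ i ∈ Tstar \ T, c i ≤ ∑ i ∈ T \ Tstar, c i := by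
    rcases le_total kbar (S.filter (fun i => c i ≤ 0)).card with h | h
    · rw [max_eq_right h] at h2
      have hF : S.filter (fun i => c i ≤ 0) = Tstar := by
        apply Finset.eq_of_subset_of_card_le
        · intro i hi
          rw [Finset.mem_filter] at hi
          exact h1 i hi.1 hi.2
        · exact h2.le
      refine le_trans (Finset.sum_nonpos ?_) (Finset.sum_nonneg hB)
      intro i hi
      have hi' := (Finset.mem_sdiff.mp hi).1
      rw [← hF, Finset.mem_filter] at hi'
      exact hi'.2
    · rw [max_eq_left h] at h2
      have hcard : (Tstar \ T).card ≤ (T \ Tstar).card := by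
        have e1 := Finset.card_sdiff_add_card_inter Tstar T
        have e2 := Finset.card_sdiff_add_card_inter T Tstar
        rw [Finset.inter_comm] at e2
        omega
      rcases (Tstar \ T).eq_empty_or_nonempty with hA | hA
      · rw [hA, Finset.sum_empty]
        exact Finset.sum_nonneg hB
      · obtain ⟨m, hm, hmax⟩ := Finset.exists_max_image (Tstar \ T) c hA
        calc ∑ i ∈ Tstar \ T, c i ≤ (Tstar \ T).card • max (c m) 0 :=
              Finset.sum_le_card_nsmul _ _ _ (fun i hi => (hmax i hi).trans (le_max_left _ _))
          _ ≤ (T \ Tstar).card • max (c m) 0 :=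
              nsmul_le_nsmul_left (le_max_right _ _) hcard
          _ ≤ ∑ i ∈ T \ Tstar, c i := by
              refine Finset.card_nsmul_le_sum _ _ _ (fun j hj => max_le ?_ (hB j hj))
              have hj' := Finset.mem_sdiff.mp hj
              exact h3 m (Finset.mem_sdiff.mp hm).1 j
                (Finset.mem_sdiff.mpr ⟨hT hj'.1, hj'.2⟩)
  have e1 := Finset.sum_inter_add_sum_sdiff Tstar T c
  have e2 := Finset.sum_inter_add_sum_sdiff T Tstar c
  rw [Finset.inter_comm] at e2
  linarith
end

section
/- Define the total control cost of a subset T ⊆ S by Cost(T) = (∑_{i ∈ T} c⁺ i) + (∑_{i ∈ S \ T} c⁻ i) + c̄. Let T* ⊆ S satisfy: (i) every i ∈ S with c⁺ i - c⁻ i ≤ 0 belongs to T*; (ii) card T* = max k̄ (card {i ∈ S | c⁺ i - c⁻ i ≤ 0}); (iii) for every i ∈ T* and every j ∈ S \ T*, c⁺ i - c⁻ i ≤ c⁺ j - c⁻ j. Then T* minimizes the total control cost among all feasible subsets: for every T ⊆ S with k̄ ≤ card T, Cost(T*) ≤ Cost(T); moreover Cost(T*) = (∑_{i ∈ S} c⁻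 i) + (∑_{i ∈ T*} (c⁺ i - c⁻ i)) + c̄. -/
/-- Optimality of the greedy selection for the total control cost
`Cost T = ∑_{i ∈ T} c⁺ i + ∑_{i ∈ S \ T} c⁻ i + c̄` among feasible subsets
`T ⊆ S` with `kbar ≤ |T|`, together with the formula for the optimal cost. -/
theorem stmt_10 {ι : Type*} [DecidableEq ι]
    (S : Finset ι) (cp cm : ι → ℝ) (cbar : ℝ)
    (kbar : ℕ) (hkbar : kbar ≤ S.card)
    (Cost : Finset ι → ℝ)
    (hCost : ∀ T, Cost T = (∑ i ∈ T, cp i) + (∑ i ∈ S \ T, cm i) + cbar)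
    (Tstar : Finset ι) (hsub : Tstar ⊆ S)
    (h1 : ∀ i ∈ S, cp i - cm i ≤ 0 → i ∈ Tstar)
    (h2 : Tstar.card = max kbar (S.filter (fun i => cp i - cm i ≤ 0)).card)
    (h3 : ∀ i ∈ Tstar, ∀ j ∈ S \ Tstar, cp i - cm i ≤ cp j - cm j) :
    (∀ T ⊆ S, kbar ≤ T.card → Cost Tstar ≤ Cost T) ∧
      Cost Tstar = (∑ i ∈ S, cm i) + (∑ i ∈ Tstar, (cp i - cm i)) + cbar := by
  have key : ∀ T ⊆ S, Cost T = (∑ i ∈ S, cm i) + (∑ i ∈ T, (cp i - cm i)) + cbar := by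
    intro T hT
    rw [hCost, Finset.sum_sub_distrib, ← Finset.sum_sdiff hT]
    ring
  refine ⟨?_, key _ hsub⟩
  intro T hT hk
  rw [key _ hsub, key _ hT]
  have e1 := Finset.sum_inter_add_sum_sdiff Tstar T (fun i => cp i - cm i)
  have e2 := Finset.sum_inter_add_sum_sdiff T Tstar (fun i => cp i - cm i)
  rw [Finset.inter_comm] at e2
  have hpos : ∀ j ∈ T \ Tstar, 0 ≤ cp j - cm j := by
    intro j hj
    rw [Finset.mem_sdiff] at hj
    by_contra hn
    exact hj.2 (h1 j (hT hj.1) (by linarith))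
  suffices h : ∑ i ∈ Tstar \ T, (cp i - cm i) ≤ ∑ i ∈ T \ Tstar, (cp i - cm i) by
    linarith
  rcases le_total kbar (S.filter (fun i => cp i - cm i ≤ 0)).card with hc | hc
  · rw [max_eq_right hc] at h2
    have hfe : S.filter (fun i => cp i - cm i ≤ 0) = Tstar := by
      apply Finset.eq_of_subset_of_card_le
      · intro i hi
        rw [Finset.mem_filter] at hi
        exact h1 i hi.1 hi.2
      · exact h2.le
    have hA : ∑ i ∈ Tstar \ T, (cp i - cm i) ≤ 0 := by
      apply Finset.sum_nonpos
      intro i hi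
      have hi' := (Finset.mem_sdiff.1 hi).1
      rw [← hfe, Finset.mem_filter] at hi'
      exact hi'.2
    exact hA.trans (Finset.sum_nonneg hpos)
  · rw [max_eq_left hc] at h2
    have hcard : (Tstar \ T).card ≤ (T \ Tstar).card := by
      have a := Finset.card_sdiff_add_card_inter Tstar T
      have b := Finset.card_sdiff_add_card_inter T Tstar
      rw [Finset.inter_comm] at b
      omega
    rcases (T \ Tstar).eq_empty_or_nonempty with hB | hB
    · rw [hB, Finset.card_empty, Nat.le_zero, Finset.card_eq_zero] at hcard
      rw [hB, hcard]
    · obtain ⟨m, hm, hmin⟩ := Finset.exists_min_image _ (fun i => cp i - cm i) hB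
      have hm' := Finset.mem_sdiff.1 hm
      have hA := Finset.sum_le_card_nsmul (Tstar \ T) (fun i => cp i - cm i) (cp m - cm m)
        (fun i hi => h3 i (Finset.mem_sdiff.1 hi).1 m
          (Finset.mem_sdiff.2 ⟨hT hm'.1, hm'.2⟩))
      have hB' := Finset.card_nsmul_le_sum (T \ Tstar) (fun i => cp i - cm i) (cp m - cm m) hmin
      exact hA.trans ((nsmul_le_nsmul_left (hpos m hm) hcard).trans hB')
end
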